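/- For every odd n ≥ 1, ε ∈ (0,1/2), and k ≥ 1, letting q = 1 − Pr[Bin(n,ε) > n/2] (where Bin(n,ε) is a binomial random variable with n trials and success probability ε), the probability 𝒫_k(Maj_n;ε) satisfies 2^{1−n} q^k ≤ 𝒫_k(Maj_n;ε) ≤ 2 q^k. In particular, 𝒫_k(Maj_n;ε) = Θ((1 − Pr[Bin(n,ε) > n/2])^k) as k → ∞ with n and ε fixed. -/

import Mathlib

open Finset

/-- Probability weight of receiving `y` when the source string is `x`: each bit of `x`
is flipped independently with probability `ε`. -/
noncomputable def noiseWt (ε : ℝ) {n : ℕ} (x y : Fin n → Bool) : ℝ :=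
  ∏ j : Fin n, if y j = x j then 1 - ε else ε

/-- A function is balanced if it takes the values `false` and `true` equally often. -/
def BalancedFn {n : ℕ} (f : (Fin n → Bool) → Bool) : Prop :=
  (Finset.univ.filter fun x : Fin n → Bool => f x = false).card =
    (Finset.univ.filter fun x : Fin n → Bool => f x = true).card

/-- The transformation `π_S` : permute coordinates by `π` and flip the bits outside `S`. -/
def piS {n : ℕ} (π : Equiv.Perm (Fin n)) (S : Finset (Fin n)) (x : Fin n → Bool) :
    Fin n → Bool :=
  fun i => if i ∈ S then x (π i) else !(x (π i))

/-- `𝒫(f₁,…,f_k; ε)`: the probability that all `k` parties agree, where the source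
`x` is uniform on `{0,1}^n` and party `i` receives an independent `ε`-corruption `yᵢ` of `x`. -/
noncomputable def agreeProb (ε : ℝ) (n k : ℕ) (fs : Fin k → (Fin n → Bool) → Bool) : ℝ :=
  ((2 : ℝ) ^ n)⁻¹ * ∑ x : Fin n → Bool, ∑ ys : Fin k → Fin n → Bool,
    (∏ i : Fin k, noiseWt ε x (ys i)) *
      (if ∀ i j : Fin k, fs i (ys i) = fs j (ys j) then 1 else 0)

/-- The number of ones (`true` coordinates) in a string. -/
def countOnes {n : ℕ} (x : Fin n → Bool) : ℕ := ∑ i : Fin n, cond (x i) 1 0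

/-- The majority function on `n` bits: `1` iff more than `n/2` of the bits are `1`. -/
def majn (n : ℕ) : (Fin n → Bool) → Bool := fun x => decide (n < 2 * countOnes x)

/-!
Given the source `x`, the parties are independent, so `𝒫_k(f; ε)` is the average over `x` of
`p₀(x) ^ k + p₁(x) ^ k`, where `p_b(x)` is the probability that one party outputs `b`. Majority on
an odd number of bits commutes with complementation, so `p₁(x) = p₀(xᶜ)` and the average is
`2 / 2 ^ n * ∑ x, p₀(x) ^ k`. Since `ε ≤ 1 / 2`, the noise operator preserves antitone functions;
as majority is monotone, `p₀` is largest at the all-zeros string, where it equals `q`. Keeping only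
that term of the sum gives the lower bound, and bounding every term by it gives the upper one.
-/

section NoiseOperator

variable {ε : ℝ} {n : ℕ}

/-- The noise operator `(T g)(x) = 𝔼[g(y)]`, where `y` is an `ε`-corruption of `x`. -/
noncomputable def noiseOp (ε : ℝ) (g : (Fin n → Bool) → ℝ) (x : Fin n → Bool) : ℝ :=
  ∑ y, noiseWt ε x y * g y

lemma noiseWt_nonneg (hε₀ : 0 ≤ ε) (hε₁ : ε ≤ 1) (x y : Fin n → Bool) : 0 ≤ noiseWt ε x y :=
  prod_nonneg fun j _ => by split_ifs <;> linarith

lemma sum_noiseWt (ε : ℝ) (x : Fin n → Bool) : ∑ y, noiseWt ε x y = 1 := by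
  have sum_bit (a : Bool) : ∑ b : Bool, (if b = a then 1 - ε else ε) = 1 := by cases a <;> simp
  simp only [noiseWt, ← Fintype.prod_sum fun j b => if b = x j then 1 - ε else ε, sum_bit,
    prod_const_one]

lemma noiseWt_compl (ε : ℝ) (x y : Fin n → Bool) : noiseWt ε xᶜ yᶜ = noiseWt ε x y := by
  simp [noiseWt]

lemma noiseOp_compl (ε : ℝ) (g : (Fin n → Bool) → ℝ) (x : Fin n → Bool) :
    noiseOp ε g xᶜ = noiseOp ε (fun y => g yᶜ) x := by
  simp only [noiseOp, ← noiseWt_compl ε x]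
  exact (Equiv.sum_comp compl_involutive.toPerm fun y => noiseWt ε xᶜ y * g y).symm

lemma noiseOp_mono (hε₀ : 0 ≤ ε) (hε₁ : ε ≤ 1) {g h : (Fin n → Bool) → ℝ} (hgh : g ≤ h) :
    noiseOp ε g ≤ noiseOp ε h :=
  fun x => sum_le_sum fun y _ => mul_le_mul_of_nonneg_left (hgh y) (noiseWt_nonneg hε₀ hε₁ x y)

lemma noiseOp_succ (ε : ℝ) (g : (Fin (n + 1) → Bool) → ℝ) (x : Fin (n + 1) → Bool) :
    noiseOp ε g x = ∑ b : Bool, (if b = x 0 then 1 - ε else ε) *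
      noiseOp ε (fun y => g (Fin.cons b y)) (Fin.tail x) := by
  simp only [noiseOp, mul_sum]
  rw [← (Fin.consEquiv fun _ : Fin (n + 1) => Bool).sum_comp, Fintype.sum_prod_type]
  refine sum_congr rfl fun b _ => sum_congr rfl fun y _ => ?_
  simp only [noiseWt, Fin.prod_univ_succ, mul_assoc]
  rfl

lemma antitone_sum_bit_noise (hε : ε ≤ 1 / 2) {h : Bool → ℝ} (hh : Antitone h) :
    Antitone fun a : Bool => ∑ b : Bool, (if b = a then 1 - ε else ε) * h b := by
  have htf : h true ≤ h false := hh (Bool.false_le true)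
  have hflip : (1 - ε) * h true + ε * h false ≤ ε * h true + (1 - ε) * h false := by nlinarith
  intro a a' haa'
  cases a <;> cases a'
  · exact le_rfl
  · simpa using hflip
  · exact absurd haa' (by decide)
  · exact le_rfl

lemma antitone_noiseOp (hε₀ : 0 ≤ ε) (hε₁ : ε ≤ 1 / 2) {g : (Fin n → Bool) → ℝ}
    (hg : Antitone g) : Antitone (noiseOp ε g) := by
  induction n with
  | zero => exact fun x x' _ => (congrArg (noiseOp ε g) (Subsingleton.elim x' x)).le
  | succ n ih =>
    intro x x' hx
    have tail_step (b : Bool) : noiseOp ε (fun y => g (Fin.cons b y)) (Fin.tail x') ≤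
        noiseOp ε (fun y => g (Fin.cons b y)) (Fin.tail x) :=
      ih (fun y z hyz => hg (Fin.cons_le_cons.2 ⟨le_rfl, hyz⟩)) fun i => hx i.succ
    have head_step : Antitone fun b => noiseOp ε (fun y => g (Fin.cons b y)) (Fin.tail x) :=
      fun b b' hb => noiseOp_mono hε₀ (by linarith)
        (fun y => hg (Fin.cons_le_cons.2 ⟨hb, le_rfl⟩)) _
    rw [noiseOp_succ, noiseOp_succ]
    calc ∑ b : Bool, (if b = x' 0 then 1 - ε else ε) *
          noiseOp ε (fun y => g (Fin.cons b y)) (Fin.tail x')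
        ≤ ∑ b : Bool, (if b = x' 0 then 1 - ε else ε) *
          noiseOp ε (fun y => g (Fin.cons b y)) (Fin.tail x) :=
          sum_le_sum fun b _ =>
            mul_le_mul_of_nonneg_left (tail_step b) (by split_ifs <;> linarith)
      _ ≤ ∑ b : Bool, (if b = x 0 then 1 - ε else ε) *
          noiseOp ε (fun y => g (Fin.cons b y)) (Fin.tail x) :=
          antitone_sum_bit_noise hε₁ head_step (hx 0)

end NoiseOperator

section OutputProbability

variable {ε : ℝ} {n : ℕ} {f : (Fin n → Bool) → Bool}

/-- The probability that `f` outputs `b` on an `ε`-corruption of `x`. -/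
noncomputable def outputProb (ε : ℝ) (f : (Fin n → Bool) → Bool) (b : Bool) (x : Fin n → Bool) :
    ℝ :=
  noiseOp ε (fun y => if f y = b then 1 else 0) x

/-- A Boolean function is self-dual if complementing all input bits complements its value. -/
def IsSelfDual (f : (Fin n → Bool) → Bool) : Prop :=
  ∀ y, f yᶜ = !f y

lemma outputProb_nonneg (hε₀ : 0 ≤ ε) (hε₁ : ε ≤ 1) (f : (Fin n → Bool) → Bool) (b : Bool)
    (x : Fin n → Bool) : 0 ≤ outputProb ε f b x :=
  sum_nonneg fun y _ => mul_nonneg (noiseWt_nonneg hε₀ hε₁ x y) (by positivity)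

lemma outputProb_false_eq_one_sub (ε : ℝ) (f : (Fin n → Bool) → Bool) (x : Fin n → Bool) :
    outputProb ε f false x = 1 - outputProb ε f true x := by
  rw [eq_sub_iff_add_eq, ← sum_noiseWt ε x]
  simp only [outputProb, noiseOp, ← sum_add_distrib]
  exact sum_congr rfl fun y _ => by cases f y <;> simp

lemma antitone_outputProb_false (hε₀ : 0 ≤ ε) (hε₁ : ε ≤ 1 / 2) (hf : Monotone f) :
    Antitone (outputProb ε f false) := by
  refine antitone_noiseOp hε₀ hε₁ fun y z hyz => ?_
  have hfalse : f z = false → f y = false := fun hz => Bool.eq_false_of_le_false (hz ▸ hf hyz)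
  split_ifs <;> simp_all

lemma IsSelfDual.outputProb_true (hf : IsSelfDual f) (ε : ℝ) (x : Fin n → Bool) :
    outputProb ε f true x = outputProb ε f false xᶜ := by
  simp only [outputProb, noiseOp_compl, hf _, Bool.not_eq_false']

end OutputProbability

section AgreementProbability

variable {ε : ℝ} {n k : ℕ} {f : (Fin n → Bool) → Bool}

lemma ite_forall_eq_eq_sum_ite {ι β R : Type*} [Nonempty ι] [Fintype β] [AddCommMonoidWithOne R]
    (a : ι → β) [Decidable (∀ i j, a i = a j)] [∀ b, Decidable (∀ i, a i = b)] :
    (if ∀ i j, a i = a j then 1 else 0 : R) = ∑ b, if ∀ i, a i = b then 1 else 0 := by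
  classical
  obtain ⟨i₀⟩ := ‹Nonempty ι›
  have all_eq_iff (b : β) : (∀ i, a i = b) ↔ a i₀ = b ∧ ∀ i j, a i = a j :=
    ⟨fun h => ⟨h i₀, fun i j => (h i).trans (h j).symm⟩, fun h i => (h.2 i i₀).trans h.1⟩
  simp only [all_eq_iff, ite_and, sum_ite_eq, mem_univ, if_true]

lemma agreeProb_eq_sum_prod_outputProb (hk : k ≠ 0) (ε : ℝ) (fs : Fin k → (Fin n → Bool) → Bool) :
    agreeProb ε n k fs = ((2 : ℝ) ^ n)⁻¹ * ∑ x, ∑ b, ∏ i, outputProb ε (fs i) b x := by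
  have : Nonempty (Fin k) := Fin.pos_iff_nonempty.1 (Nat.pos_of_ne_zero hk)
  simp only [agreeProb, ite_forall_eq_eq_sum_ite, mul_sum, outputProb, noiseOp, Fintype.prod_sum,
    prod_mul_distrib, Fintype.prod_ite_zero, prod_const_one]
  exact sum_congr rfl fun x _ => sum_comm

lemma IsSelfDual.agreeProb_eq (hf : IsSelfDual f) (hk : k ≠ 0) (ε : ℝ) :
    agreeProb ε n k (fun _ => f) = 2 / 2 ^ n * ∑ x, outputProb ε f false x ^ k := by
  have sum_compl : ∑ x : Fin n → Bool, outputProb ε f false xᶜ ^ k =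
      ∑ x, outputProb ε f false x ^ k :=
    Equiv.sum_comp compl_involutive.toPerm fun x => outputProb ε f false x ^ k
  simp only [agreeProb_eq_sum_prod_outputProb hk, prod_const, card_univ, Fintype.card_fin,
    Fintype.sum_bool, hf.outputProb_true, sum_add_distrib, sum_compl]
  ring

lemma IsSelfDual.mul_outputProb_pow_le_agreeProb (hf : IsSelfDual f) (hk : k ≠ 0) (hε₀ : 0 ≤ ε)
    (hε₁ : ε ≤ 1) (x : Fin n → Bool) :
    2 / 2 ^ n * outputProb ε f false x ^ k ≤ agreeProb ε n k (fun _ => f) := by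
  rw [hf.agreeProb_eq hk]
  gcongr
  exact single_le_sum (f := fun x => outputProb ε f false x ^ k)
    (fun x _ => pow_nonneg (outputProb_nonneg hε₀ hε₁ f false x) k) (mem_univ x)

lemma IsSelfDual.agreeProb_le_of_monotone (hf : IsSelfDual f) (hmono : Monotone f) (hk : k ≠ 0)
    (hε₀ : 0 ≤ ε) (hε₁ : ε ≤ 1 / 2) :
    agreeProb ε n k (fun _ => f) ≤ 2 * outputProb ε f false ⊥ ^ k := by
  calc agreeProb ε n k (fun _ => f)
      = 2 / 2 ^ n * ∑ x, outputProb ε f false x ^ k := hf.agreeProb_eq hk ε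
    _ ≤ 2 / 2 ^ n * ∑ _x : Fin n → Bool, outputProb ε f false ⊥ ^ k := by
        gcongr with x
        · exact outputProb_nonneg hε₀ (by linarith) f false x
        · exact antitone_outputProb_false hε₀ hε₁ hmono bot_le
    _ = 2 * outputProb ε f false ⊥ ^ k := by
        rw [sum_const, card_univ, Fintype.card_fun, Fintype.card_bool, Fintype.card_fin,
          nsmul_eq_mul]
        push_cast
        field_simp

end AgreementProbability

section Majority

variable {n : ℕ}

lemma countOnes_eq_card (y : Fin n → Bool) : countOnes y = #{i | y i = true} := by
  simp only [countOnes, card_filter, Bool.cond_eq_ite]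

lemma monotone_countOnes : Monotone (countOnes (n := n)) := by
  intro y z hyz
  rw [countOnes_eq_card, countOnes_eq_card]
  exact card_le_card (monotone_filter_right _ fun i _ => hyz i)

lemma countOnes_compl_add (y : Fin n → Bool) : countOnes yᶜ + countOnes y = n := by
  have h := card_filter_add_card_filter_not (s := (univ : Finset (Fin n))) (fun i => y i = true)
  simpa [countOnes_eq_card, add_comm] using h

lemma noiseWt_bot (ε : ℝ) (y : Fin n → Bool) :
    noiseWt ε ⊥ y = ε ^ countOnes y * (1 - ε) ^ (n - countOnes y) := by
  have hcompl : n - countOnes y = countOnes yᶜ :=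
    (Nat.eq_sub_of_add_eq (countOnes_compl_add y)).symm
  rw [hcompl]
  simp only [countOnes, ← prod_pow_eq_pow_sum, ← prod_mul_distrib, noiseWt]
  exact prod_congr rfl fun i _ => by cases h : y i <;> simp [h]

lemma sum_comp_countOnes {M : Type*} [AddCommMonoid M] (h : ℕ → M) :
    ∑ y : Fin n → Bool, h (countOnes y) = ∑ j ∈ range (n + 1), n.choose j • h j := by
  have hpow := sum_powerset_apply_card h (x := (univ : Finset (Fin n)))
  rw [card_univ, Fintype.card_fin] at hpow
  rw [← hpow]
  refine sum_nbij' (fun y => univ.filter fun i => y i = true) (fun s i => decide (i ∈ s))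
    ?_ ?_ ?_ ?_ ?_
  all_goals simp [countOnes_eq_card]

lemma noiseOp_comp_countOnes_bot (ε : ℝ) (h : ℕ → ℝ) :
    noiseOp ε (fun y : Fin n → Bool => h (countOnes y)) ⊥ =
      ∑ j ∈ range (n + 1), n.choose j * ε ^ j * (1 - ε) ^ (n - j) * h j := by
  simp only [noiseOp, noiseWt_bot]
  rw [sum_comp_countOnes fun j => ε ^ j * (1 - ε) ^ (n - j) * h j]
  simp only [nsmul_eq_mul, mul_assoc]

lemma monotone_majn (n : ℕ) : Monotone (majn n) := by
  intro y z hyz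
  have := monotone_countOnes hyz
  simp only [majn, Bool.le_iff_imp, decide_eq_true_eq]
  omega

lemma isSelfDual_majn (hodd : Odd n) : IsSelfDual (majn n) := by
  intro y
  obtain ⟨m, hm⟩ := hodd
  have := countOnes_compl_add y
  simp only [majn, ← decide_not, decide_eq_decide]
  omega

lemma outputProb_majn_true_bot (ε : ℝ) (n : ℕ) :
    outputProb ε (majn n) true ⊥ = ∑ j ∈ range (n + 1),
      if n < 2 * j then (n.choose j : ℝ) * ε ^ j * (1 - ε) ^ (n - j) else 0 := by
  simp only [outputProb, majn, decide_eq_true_eq,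
    noiseOp_comp_countOnes_bot ε fun j => if n < 2 * j then 1 else 0, mul_ite, mul_one, mul_zero]

end Majority

/-- With `q = 1 - Pr[Bin(n,ε) > n/2]`, the all-`Maj_n` protocol satisfies
`2^{1-n} q^k ≤ 𝒫_k(Maj_n; ε) ≤ 2 q^k`. -/
theorem statement11 (n : ℕ) (hn : 1 ≤ n) (hodd : Odd n) (k : ℕ) (hk : 1 ≤ k)
    (ε : ℝ) (hε₀ : 0 < ε) (hε₁ : ε < 1 / 2) (q : ℝ)
    (hq : q = 1 - ∑ j ∈ Finset.range (n + 1),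
      if n < 2 * j then (n.choose j : ℝ) * ε ^ j * (1 - ε) ^ (n - j) else 0) :
    2 / 2 ^ n * q ^ k ≤ agreeProb ε n k (fun _ => majn n) ∧
      agreeProb ε n k (fun _ => majn n) ≤ 2 * q ^ k := by
  rw [← outputProb_majn_true_bot, ← outputProb_false_eq_one_sub] at hq
  subst hq
  have hdual := isSelfDual_majn hodd
  have hk₀ : k ≠ 0 := Nat.one_le_iff_ne_zero.1 hk
  exact ⟨hdual.mul_outputProb_pow_le_agreeProb hk₀ hε₀.le (by linarith) ⊥,
    hdual.agreeProb_le_of_monotone (monotone_majn n) hk₀ hε₀.le hε₁.le⟩
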